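/- For a bivariate standard normal vector (X,Y) with correlation ρ ∈ [-1,1], E[|X||Y|] = (2/π)(√(1-ρ²) + ρ arcsin ρ). Consequently Cov(|X|,|Y|) = (2/π)(√(1-ρ²) + ρ arcsin ρ - 1). -/

import Mathlib

open Real MeasureTheory ProbabilityTheory

/-!
In polar coordinates a function homogeneous of degree `s` integrates against a centred isotropic
Gaussian measure on the plane as a radial moment, which is a value of the Gamma function, times the
integral of the function over the unit circle. With `ρ = sin α` the second coordinate of the pair
becomes `r sin (θ + α)`, so the mean `E|Y|` and the product moment `E|X||Y|` reduce to the integrals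
of `|sin (θ + α)|` and `|cos θ| |sin (θ + α)|` over the circle. Both integrands are `π`-periodic,
and for the second one the period `[-π/2, π/2]`, on which `cos` is nonnegative, leaves a single
sign change, at `θ = -α`.
-/

section PolarCoordinates

variable {E : Type*} [NormedAddCommGroup E] [NormedSpace ℝ E] {v : NNReal} {s : ℝ}

lemma integral_gaussianReal_prod_eq_integral_smul {μ₁ μ₂ : ℝ} {v₁ v₂ : NNReal} (hv₁ : v₁ ≠ 0)
    (hv₂ : v₂ ≠ 0) (f : ℝ × ℝ → E) :
    ∫ p, f p ∂((gaussianReal μ₁ v₁).prod (gaussianReal μ₂ v₂)) =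
      ∫ p : ℝ × ℝ, (gaussianPDFReal μ₁ v₁ p.1 * gaussianPDFReal μ₂ v₂ p.2) • f p := by
  rw [gaussianReal_of_var_ne_zero μ₁ hv₁, gaussianReal_of_var_ne_zero μ₂ hv₂,
    prod_withDensity (measurable_gaussianPDF _ _) (measurable_gaussianPDF _ _),
    integral_withDensity_eq_integral_toReal_smul (by fun_prop)
      (ae_of_all _ fun _ ↦ ENNReal.mul_lt_top gaussianPDF_lt_top gaussianPDF_lt_top),
    ← Measure.volume_eq_prod]
  simp only [ENNReal.toReal_mul, toReal_gaussianPDF]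

lemma gaussianPDFReal_mul_cos_mul_gaussianPDFReal_mul_sin (v : NNReal) (r θ : ℝ) :
    gaussianPDFReal 0 v (r * cos θ) * gaussianPDFReal 0 v (r * sin θ) =
      (2 * π * v)⁻¹ * rexp (-(2 * v : ℝ)⁻¹ * r ^ 2) := by
  have hexp : rexp (-(r * cos θ) ^ 2 / (2 * v)) * rexp (-(r * sin θ) ^ 2 / (2 * v)) =
      rexp (-(2 * v : ℝ)⁻¹ * r ^ 2) := by
    rw [← exp_add]
    congr 1
    linear_combination (-(2 * v : ℝ)⁻¹ * r ^ 2) * sin_sq_add_cos_sq θ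
  have hnorm : (√(2 * π * v))⁻¹ * (√(2 * π * v))⁻¹ = (2 * π * v)⁻¹ := by
    rw [← mul_inv, mul_self_sqrt (by positivity)]
  rw [gaussianPDFReal, gaussianPDFReal, sub_zero, sub_zero, mul_mul_mul_comm, hnorm, hexp]

lemma integral_rpow_add_one_mul_exp_neg_inv_mul_sq {c : ℝ} (hc : 0 < c) (hs : -2 < s) :
    ∫ r in Set.Ioi (0 : ℝ), r ^ (s + 1) * rexp (-c⁻¹ * r ^ 2) =
      c ^ (s / 2 + 1) / 2 * Gamma (s / 2 + 1) := by
  have h := integral_rpow_mul_exp_neg_mul_rpow two_pos (by linarith : -1 < s + 1) (inv_pos.2 hc)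
  have hexponent : (s + 1 + 1) / 2 = s / 2 + 1 := by ring
  simp only [rpow_two] at h
  rw [h, neg_div, hexponent, inv_rpow hc.le, rpow_neg hc.le, inv_inv, mul_one_div]

lemma integral_gaussianReal_prod_of_homogeneous (hv : v ≠ 0) (hs : -2 < s) {f : ℝ × ℝ → E}
    (hf : ∀ r : ℝ, 0 < r → ∀ p, f (r • p) = r ^ s • f p) :
    ∫ p, f p ∂((gaussianReal 0 v).prod (gaussianReal 0 v)) =
      ((2 * v) ^ (s / 2) * Gamma (s / 2 + 1) / (2 * π)) • ∫ θ in -π..π, f (cos θ, sin θ) := by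
  have hpolar : ∀ p ∈ polarCoord.target,
      p.1 • (gaussianPDFReal 0 v (polarCoord.symm p).1 *
        gaussianPDFReal 0 v (polarCoord.symm p).2) • f (polarCoord.symm p) =
      (2 * π * v)⁻¹ • (p.1 ^ (s + 1) * rexp (-(2 * v : ℝ)⁻¹ * p.1 ^ 2)) •
        f (cos p.2, sin p.2) := by
    rintro ⟨r, θ⟩ ⟨hr : 0 < r, -⟩
    have hrθ : f (r * cos θ, r * sin θ) = r ^ s • f (cos θ, sin θ) := hf r hr (cos θ, sin θ)
    simp only [polarCoord_symm_apply, gaussianPDFReal_mul_cos_mul_gaussianPDFReal_mul_sin, hrθ,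
      smul_smul, rpow_add_one hr.ne']
    ring_nf
  have hmeas : MeasurableSet polarCoord.target := polarCoord.open_target.measurableSet
  rw [integral_gaussianReal_prod_eq_integral_smul hv hv, ← integral_comp_polarCoord_symm,
    setIntegral_congr_fun hmeas hpolar, integral_smul, polarCoord_target,
    Measure.volume_eq_prod, ← Measure.prod_restrict,
    integral_prod_smul (fun r : ℝ ↦ r ^ (s + 1) * rexp (-(2 * v : ℝ)⁻¹ * r ^ 2))
      (fun θ ↦ f (cos θ, sin θ)),
    integral_rpow_add_one_mul_exp_neg_inv_mul_sq (by positivity) hs, smul_smul,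
    intervalIntegral.integral_of_le (by linarith [pi_pos]), integral_Ioc_eq_integral_Ioo,
    rpow_add_one (by positivity)]
  congr 1
  field_simp

end PolarCoordinates

section AngularIntegrals

lemma integral_neg_self_of_periodic {E : Type*} [NormedAddCommGroup E] [NormedSpace ℝ E]
    {g : ℝ → E} {T : ℝ} (hg : Function.Periodic g T)
    (hint : ∀ a b, IntervalIntegrable g volume a b) (a : ℝ) :
    ∫ θ in -T..T, g θ = (2 : ℤ) • ∫ θ in a..a + T, g θ := by
  rw [hg.intervalIntegral_add_eq a (-T), ← hg.intervalIntegral_add_zsmul_eq 2 (-T) hint]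
  congr 1
  simp only [zsmul_eq_mul, Int.cast_ofNat]
  ring

lemma integral_abs_sin_add (α : ℝ) : ∫ θ in -π..π, |sin (θ + α)| = 4 := by
  have hper : Function.Periodic (fun θ ↦ |sin (θ + α)|) π := fun θ ↦ by
    simp only [add_right_comm θ π α, sin_add_pi, abs_neg]
  have hcont : Continuous fun θ ↦ |sin (θ + α)| := by fun_prop
  have habs : ∫ θ in (0 : ℝ)..π, |sin θ| = ∫ θ in (0 : ℝ)..π, sin θ := by
    refine intervalIntegral.integral_congr fun θ hθ ↦ abs_of_nonneg ?_
    rw [Set.uIcc_of_le pi_pos.le] at hθ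
    exact sin_nonneg_of_mem_Icc hθ
  rw [integral_neg_self_of_periodic hper (fun _ _ ↦ hcont.intervalIntegrable _ _) (-α),
    intervalIntegral.integral_comp_add_right (fun θ ↦ |sin θ|) α, neg_add_cancel,
    neg_add_cancel_comm, habs, integral_sin]
  norm_num

lemma integral_cos_mul_sin_add (a b α : ℝ) :
    ∫ θ in a..b, cos θ * sin (θ + α) =
      (b - a) * sin α / 2 - (cos (2 * b + α) - cos (2 * a + α)) / 4 := by
  have hprod (θ : ℝ) : cos θ * sin (θ + α) = (sin α + sin (2 * θ + α)) / 2 := by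
    have h := two_mul_sin_mul_cos (θ + α) θ
    rw [add_sub_cancel_left, show θ + α + θ = 2 * θ + α by ring] at h
    linarith
  have hcont : Continuous fun θ : ℝ ↦ sin (2 * θ + α) := by fun_prop
  simp only [hprod]
  rw [intervalIntegral.integral_div,
    intervalIntegral.integral_add intervalIntegrable_const (hcont.intervalIntegrable a b),
    intervalIntegral.integral_const, intervalIntegral.integral_comp_mul_add _ two_ne_zero,
    integral_sin, smul_eq_mul, smul_eq_mul]
  ring

lemma integral_half_circle_abs_cos_mul_abs_sin_add {α : ℝ}
    (hα : α ∈ Set.Icc (-(π / 2)) (π / 2)) :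
    ∫ θ in -(π / 2)..π / 2, |cos θ| * |sin (θ + α)| = cos α + α * sin α := by
  obtain ⟨hα₁, hα₂⟩ := hα
  have hcont : Continuous fun θ ↦ |cos θ| * |sin (θ + α)| := by fun_prop
  have hleft : ∫ θ in -(π / 2)..-α, |cos θ| * |sin (θ + α)| =
      -∫ θ in -(π / 2)..-α, cos θ * sin (θ + α) := by
    rw [← intervalIntegral.integral_neg]
    refine intervalIntegral.integral_congr fun θ hθ ↦ ?_
    obtain ⟨h₁, h₂⟩ := Set.uIcc_of_le (neg_le_neg hα₂) ▸ hθ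
    have hcos : 0 ≤ cos θ := cos_nonneg_of_neg_pi_div_two_le_of_le h₁ (by linarith)
    have hsin : sin (θ + α) ≤ 0 := sin_nonpos_of_nonpos_of_neg_pi_le (by linarith) (by linarith)
    simp only [abs_of_nonneg hcos, abs_of_nonpos hsin, mul_neg]
  have hright : ∫ θ in -α..π / 2, |cos θ| * |sin (θ + α)| =
      ∫ θ in -α..π / 2, cos θ * sin (θ + α) := by
    refine intervalIntegral.integral_congr fun θ hθ ↦ ?_
    obtain ⟨h₁, h₂⟩ := Set.uIcc_of_le (neg_le.1 hα₁) ▸ hθ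
    have hcos : 0 ≤ cos θ := cos_nonneg_of_neg_pi_div_two_le_of_le (by linarith) h₂
    have hsin : 0 ≤ sin (θ + α) := sin_nonneg_of_nonneg_of_le_pi (by linarith) (by linarith)
    simp only [abs_of_nonneg hcos, abs_of_nonneg hsin]
  rw [← intervalIntegral.integral_add_adjacent_intervals (hcont.intervalIntegrable _ (-α))
      (hcont.intervalIntegrable _ _), hleft, hright, integral_cos_mul_sin_add,
    integral_cos_mul_sin_add, show 2 * -α + α = -α by ring,
    show 2 * -(π / 2) + α = α - π by ring, show 2 * (π / 2) + α = α + π by ring, cos_neg,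
    cos_sub_pi, cos_add_pi]
  ring

lemma integral_abs_cos_mul_abs_sin_add {α : ℝ} (hα : α ∈ Set.Icc (-(π / 2)) (π / 2)) :
    ∫ θ in -π..π, |cos θ| * |sin (θ + α)| = 2 * (cos α + α * sin α) := by
  have hper : Function.Periodic (fun θ ↦ |cos θ| * |sin (θ + α)|) π := fun θ ↦ by
    simp only [add_right_comm θ π α, sin_add_pi, cos_add_pi, abs_neg]
  have hcont : Continuous fun θ ↦ |cos θ| * |sin (θ + α)| := by fun_prop
  rw [integral_neg_self_of_periodic hper (fun _ _ ↦ hcont.intervalIntegrable _ _)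
      (-(π / 2)), show -(π / 2) + π = π / 2 by ring,
    integral_half_circle_abs_cos_mul_abs_sin_add hα, zsmul_eq_mul, Int.cast_ofNat]

end AngularIntegrals

section GaussianMoments

variable {v : NNReal}

lemma integral_abs_sin_mul_fst_add_cos_mul_snd (hv : v ≠ 0) (α : ℝ) :
    ∫ p : ℝ × ℝ, |sin α * p.1 + cos α * p.2| ∂((gaussianReal 0 v).prod (gaussianReal 0 v)) =
      √(2 * v / π) := by
  have hhom (r : ℝ) (hr : 0 < r) (p : ℝ × ℝ) : |sin α * (r • p).1 + cos α * (r • p).2| =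
      r ^ (1 : ℝ) • |sin α * p.1 + cos α * p.2| := by
    simp only [Prod.smul_fst, Prod.smul_snd, smul_eq_mul, mul_left_comm _ r, ← mul_add, abs_mul,
      abs_of_pos hr, rpow_one]
  rw [integral_gaussianReal_prod_of_homogeneous hv (by norm_num) hhom]
  simp only [← sin_add, add_comm α]
  rw [integral_abs_sin_add, Gamma_add_one (by norm_num), Gamma_one_half_eq, ← sqrt_eq_rpow,
    sqrt_div (by positivity), smul_eq_mul]
  have hsq := sq_sqrt pi_pos.le
  field_simp
  linear_combination 4 * hsq

lemma integral_abs_fst_mul_abs_sin_mul_fst_add_cos_mul_snd (hv : v ≠ 0) {α : ℝ}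
    (hα : α ∈ Set.Icc (-(π / 2)) (π / 2)) :
    ∫ p : ℝ × ℝ, |p.1| * |sin α * p.1 + cos α * p.2|
        ∂((gaussianReal 0 v).prod (gaussianReal 0 v)) =
      2 * v / π * (cos α + α * sin α) := by
  have hhom (r : ℝ) (hr : 0 < r) (p : ℝ × ℝ) :
      |(r • p).1| * |sin α * (r • p).1 + cos α * (r • p).2| =
        r ^ (2 : ℝ) • (|p.1| * |sin α * p.1 + cos α * p.2|) := by
    simp only [Prod.smul_fst, Prod.smul_snd, smul_eq_mul, mul_left_comm _ r, ← mul_add, abs_mul,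
      abs_of_pos hr, rpow_two]
    ring
  rw [integral_gaussianReal_prod_of_homogeneous hv (by norm_num) hhom]
  simp only [← sin_add, add_comm α]
  rw [integral_abs_cos_mul_abs_sin_add hα, div_self two_ne_zero, rpow_one, one_add_one_eq_two,
    Gamma_two, smul_eq_mul]
  ring

end GaussianMoments

/-- For a bivariate standard normal pair `(X,Y)` with correlation `ρ ∈ [-1,1]` (realized as
`X = Z₁`, `Y = ρZ₁ + √(1-ρ²)Z₂` with `Z₁, Z₂` i.i.d. standard normal),
`E[|X||Y|] = (2/π)(√(1-ρ²) + ρ arcsin ρ)` and hence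
`Cov(|X|,|Y|) = (2/π)(√(1-ρ²) + ρ arcsin ρ - 1)`. -/
theorem stmt13 (ρ : ℝ) (hρ : ρ ∈ Set.Icc (-1:ℝ) 1) :
    (∫ p : ℝ × ℝ, |p.1| * |ρ * p.1 + Real.sqrt (1 - ρ^2) * p.2|
        ∂((gaussianReal 0 1).prod (gaussianReal 0 1)))
      = 2/π * (Real.sqrt (1 - ρ^2) + ρ * Real.arcsin ρ) ∧
    (∫ p : ℝ × ℝ, |p.1| * |ρ * p.1 + Real.sqrt (1 - ρ^2) * p.2|
        ∂((gaussianReal 0 1).prod (gaussianReal 0 1)))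
      - (∫ p : ℝ × ℝ, |p.1| ∂((gaussianReal 0 1).prod (gaussianReal 0 1))) *
          (∫ p : ℝ × ℝ, |ρ * p.1 + Real.sqrt (1 - ρ^2) * p.2|
            ∂((gaussianReal 0 1).prod (gaussianReal 0 1)))
      = 2/π * (Real.sqrt (1 - ρ^2) + ρ * Real.arcsin ρ - 1) := by
  have hsin : sin (arcsin ρ) = ρ := sin_arcsin hρ.1 hρ.2
  have hcos : cos (arcsin ρ) = √(1 - ρ ^ 2) := cos_arcsin ρ
  have hprod := integral_abs_fst_mul_abs_sin_mul_fst_add_cos_mul_snd one_ne_zero (arcsin_mem_Icc ρ)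
  have hX := integral_abs_sin_mul_fst_add_cos_mul_snd one_ne_zero (π / 2)
  have hY := integral_abs_sin_mul_fst_add_cos_mul_snd one_ne_zero (arcsin ρ)
  simp only [sin_pi_div_two, cos_pi_div_two, one_mul, zero_mul, add_zero] at hX
  rw [hsin, hcos] at hprod hY
  rw [hprod, hX, hY, mul_self_sqrt (by positivity), NNReal.coe_one]
  constructor <;> ring
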